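/- For all w1, w2 ∈ H^1 one has S(w1 ш̄ w2) = S(w1) ш S(w2); that is, S is a ℚ-algebra isomorphism from (H^1, ш̄) to (H^1, ш). -/

import Mathlib

open scoped BigOperators

/-- The two-letter alphabet {x, y}. -/
inductive Letter : Type
  | x : Letter
  | y : Letter
deriving DecidableEq

/-- `H = ℚ⟨x,y⟩`, the noncommutative polynomial ring over ℚ in two
indeterminates, realized as the monoid algebra of the free monoid on `{x,y}`. -/
abbrev H : Type := MonoidAlgebra ℚ (FreeMonoid Letter)

namespace H

/-- The monomial (word) of `H` corresponding to an element of the free monoid. -/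
noncomputable def word (w : FreeMonoid Letter) : H := MonoidAlgebra.single w 1

/-- The generator `x`. -/
noncomputable def X : H := word (FreeMonoid.of Letter.x)

/-- The generator `y`. -/
noncomputable def Y : H := word (FreeMonoid.of Letter.y)

/-- The word `z_k = x^{k-1} y` (for `k ≥ 1`). -/
def zW (k : ℕ) : FreeMonoid Letter :=
  FreeMonoid.ofList (List.replicate (k - 1) Letter.x ++ [Letter.y])

/-- `z_k = x^{k-1} y` as an element of `H`. -/
noncomputable def z (k : ℕ) : H := word (zW k)

/-- A list `[k₁,…,kₙ]` gives the word `z_{k₁} z_{k₂} ⋯ z_{kₙ}`. -/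
def zListW (ks : List ℕ) : FreeMonoid Letter :=
  FreeMonoid.ofList (ks.flatMap fun k => List.replicate (k - 1) Letter.x ++ [Letter.y])

/-- `H¹ = ℚ + Hy` as a ℚ-submodule of `H`. -/
noncomputable def H1 : Submodule ℚ H :=
  LinearMap.range (LinearMap.mulRight ℚ Y) ⊔ Submodule.span ℚ {1}

/-- `H⁰ = ℚ + xHy` as a ℚ-submodule of `H`. -/
noncomputable def H0 : Submodule ℚ H :=
  LinearMap.range ((LinearMap.mulRight ℚ Y).comp (LinearMap.mulLeft ℚ X)) ⊔
    Submodule.span ℚ {1}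

/-- Parse a word of `H¹` into the exponent list of its `z`-decomposition:
`z_{k₁}⋯z_{kₙ} ↦ [k₁,…,kₙ]` (auxiliary accumulator version). -/
def toZAux : List Letter → ℕ → List ℕ
  | [], _ => []
  | Letter.x :: r, n => toZAux r (n + 1)
  | Letter.y :: r, n => (n + 1) :: toZAux r 0

/-- The `z`-decomposition of a word of `H¹`. -/
def toZ (w : FreeMonoid Letter) : List ℕ := toZAux (FreeMonoid.toList w) 0

/-- The harmonic product on words of `H¹` (via `z`-decompositions):
`1 * w = w * 1 = w` and
`z_k w₁ * z_l w₂ = z_k (w₁ * z_l w₂) + z_l (z_k w₁ * w₂) + z_{k+l} (w₁ * w₂)`. -/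
noncomputable def harmW : List ℕ → List ℕ → H
  | [], w => word (zListW w)
  | k :: w1, [] => word (zListW (k :: w1))
  | k :: w1, l :: w2 =>
      z k * harmW w1 (l :: w2) + z l * harmW (k :: w1) w2 + z (k + l) * harmW w1 w2
termination_by w1 w2 => w1.length + w2.length
decreasing_by all_goals simp [Nat.lt_succ_iff] <;> omega

/-- The n-harmonic product on words of `H¹`:
`1 *̄ w = w *̄ 1 = w` and
`z_k w₁ *̄ z_l w₂ = z_k (w₁ *̄ z_l w₂) + z_l (z_k w₁ *̄ w₂) − z_{k+l} (w₁ *̄ w₂)`. -/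
noncomputable def nharmW : List ℕ → List ℕ → H
  | [], w => word (zListW w)
  | k :: w1, [] => word (zListW (k :: w1))
  | k :: w1, l :: w2 =>
      z k * nharmW w1 (l :: w2) + z l * nharmW (k :: w1) w2 - z (k + l) * nharmW w1 w2
termination_by w1 w2 => w1.length + w2.length
decreasing_by all_goals simp [Nat.lt_succ_iff] <;> omega

/-- The harmonic product `*` on `H¹`, extended ℚ-bilinearly. -/
noncomputable def harm (a b : H) : H :=
  Finsupp.sum a.coeff fun w1 c1 =>
    Finsupp.sum b.coeff fun w2 c2 => (c1 * c2) • harmW (toZ w1) (toZ w2)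

/-- The n-harmonic product `*̄` on `H¹`, extended ℚ-bilinearly. -/
noncomputable def nharm (a b : H) : H :=
  Finsupp.sum a.coeff fun w1 c1 =>
    Finsupp.sum b.coeff fun w2 c2 => (c1 * c2) • nharmW (toZ w1) (toZ w2)

/-- The letter exchange `τ(x) = y`, `τ(y) = x`. -/
def τ : Letter → Letter
  | Letter.x => Letter.y
  | Letter.y => Letter.x

/-- `δ(w) = 1` if `w` is the empty word, `0` otherwise. -/
def δ : List Letter → ℚ
  | [] => 1
  | _ :: _ => 0

/-- The shuffle product on words:
`1 ш w = w ш 1 = w` and `u₁w₁ ш u₂w₂ = u₁(w₁ ш u₂w₂) + u₂(u₁w₁ ш w₂)`. -/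
noncomputable def shW : List Letter → List Letter → H
  | [], w => word (FreeMonoid.ofList w)
  | u :: w, [] => word (FreeMonoid.ofList (u :: w))
  | u1 :: w1, u2 :: w2 =>
      word (FreeMonoid.of u1) * shW w1 (u2 :: w2) +
        word (FreeMonoid.of u2) * shW (u1 :: w1) w2
termination_by w1 w2 => w1.length + w2.length
decreasing_by all_goals simp [Nat.lt_succ_iff]

/-- The n-shuffle product on words: `1 ш̄ w = w ш̄ 1 = w` and
`u₁w₁ ш̄ u₂w₂ = u₁(w₁ ш̄ u₂w₂) + u₂(u₁w₁ ш̄ w₂) − δ(w₁)τ(u₁)u₂w₂ − δ(w₂)τ(u₂)u₁w₁`. -/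
noncomputable def nshW : List Letter → List Letter → H
  | [], w => word (FreeMonoid.ofList w)
  | u :: w, [] => word (FreeMonoid.ofList (u :: w))
  | u1 :: w1, u2 :: w2 =>
      word (FreeMonoid.of u1) * nshW w1 (u2 :: w2) +
        word (FreeMonoid.of u2) * nshW (u1 :: w1) w2 -
        δ w1 • word (FreeMonoid.ofList (τ u1 :: u2 :: w2)) -
        δ w2 • word (FreeMonoid.ofList (τ u2 :: u1 :: w1))
termination_by w1 w2 => w1.length + w2.length
decreasing_by all_goals simp [Nat.lt_succ_iff]

/-- The shuffle product `ш` on `H`, extended ℚ-bilinearly. -/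
noncomputable def sh (a b : H) : H :=
  Finsupp.sum a.coeff fun w1 c1 =>
    Finsupp.sum b.coeff fun w2 c2 =>
      (c1 * c2) • shW (FreeMonoid.toList w1) (FreeMonoid.toList w2)

/-- The n-shuffle product `ш̄` on `H`, extended ℚ-bilinearly. -/
noncomputable def nsh (a b : H) : H :=
  Finsupp.sum a.coeff fun w1 c1 =>
    Finsupp.sum b.coeff fun w2 c2 =>
      (c1 * c2) • nshW (FreeMonoid.toList w1) (FreeMonoid.toList w2)

/-- `S₁`: the ℚ-algebra endomorphism of `H` with `S₁(x) = x`, `S₁(y) = x + y`. -/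
noncomputable def S1 : H →ₐ[ℚ] H :=
  MonoidAlgebra.lift ℚ H (FreeMonoid Letter)
    (FreeMonoid.lift fun u => match u with
      | Letter.x => X
      | Letter.y => X + Y)

/-- `S₂`: the ℚ-algebra endomorphism of `H` with `S₂(x) = x`, `S₂(y) = y − x`. -/
noncomputable def S2 : H →ₐ[ℚ] H :=
  MonoidAlgebra.lift ℚ H (FreeMonoid Letter)
    (FreeMonoid.lift fun u => match u with
      | Letter.x => X
      | Letter.y => Y - X)

/-- `S` on a word: `S(1) = 1` and `S(Fy) = S₁(F)y`. -/
noncomputable def SW (w : FreeMonoid Letter) : H :=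
  match (FreeMonoid.toList w).getLast? with
  | some Letter.y =>
      S1 (word (FreeMonoid.ofList (FreeMonoid.toList w).dropLast)) * Y
  | _ => word w

/-- The ℚ-linear map `S : H¹ → H¹` with `S(1) = 1`, `S(Fy) = S₁(F)y`. -/
noncomputable def S (a : H) : H := Finsupp.sum a.coeff fun w c => c • SW w

/-- `S̃` on a word: `S̃(1) = 1` and `S̃(Fy) = S₂(F)y`. -/
noncomputable def StW (w : FreeMonoid Letter) : H :=
  match (FreeMonoid.toList w).getLast? with
  | some Letter.y =>
      S2 (word (FreeMonoid.ofList (FreeMonoid.toList w).dropLast)) * Y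
  | _ => word w

/-- The ℚ-linear map `S̃ : H¹ → H¹` with `S̃(1) = 1`, `S̃(Fy) = S₂(F)y`. -/
noncomputable def St (a : H) : H := Finsupp.sum a.coeff fun w c => c • StW w

/-- The multiple zeta value `ζ(k₁,…,kₙ)`: the sum over strictly decreasing
tuples `m₁ > m₂ > ⋯ > mₙ > 0` of `1/(m₁^{k₁}⋯mₙ^{kₙ})`. -/
noncomputable def mzeta (ks : List ℕ) : ℝ :=
  ∑' m : {f : Fin ks.length → ℕ // (∀ i, 0 < f i) ∧
      ∀ i j : Fin ks.length, i < j → f j < f i},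
    ∏ i : Fin ks.length, ((m.1 i : ℝ) ^ ks.get i)⁻¹

/-- The non-strict multiple zeta value `ζ̄(k₁,…,kₙ)`: the sum over weakly
decreasing tuples `m₁ ≥ m₂ ≥ ⋯ ≥ mₙ > 0` of `1/(m₁^{k₁}⋯mₙ^{kₙ})`. -/
noncomputable def nmzeta (ks : List ℕ) : ℝ :=
  ∑' m : {f : Fin ks.length → ℕ // (∀ i, 0 < f i) ∧
      ∀ i j : Fin ks.length, i ≤ j → f j ≤ f i},
    ∏ i : Fin ks.length, ((m.1 i : ℝ) ^ ks.get i)⁻¹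

/-- The evaluation map `Z : H⁰ → ℝ`, `Z(1) = 1`,
`Z(z_{k₁}⋯z_{kₙ}) = ζ(k₁,…,kₙ)` (extended ℚ-linearly to `H`). -/
noncomputable def Z (a : H) : ℝ := Finsupp.sum a.coeff fun w c => (c : ℝ) * mzeta (toZ w)

/-- The n-evaluation map `Z̄ : H⁰ → ℝ`, `Z̄(1) = 1`,
`Z̄(z_{k₁}⋯z_{kₙ}) = ζ̄(k₁,…,kₙ)` (extended ℚ-linearly to `H`). -/
noncomputable def Zbar (a : H) : ℝ := Finsupp.sum a.coeff fun w c => (c : ℝ) * nmzeta (toZ w)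

/-- `i`-fold n-harmonic power: `a^{*̄ 0} = 1`, `a^{*̄ (i+1)} = a *̄ a^{*̄ i}`. -/
noncomputable def nharmPow : ℕ → H → H
  | 0, _ => 1
  | i + 1, a => nharm a (nharmPow i a)

/-- `i`-fold n-shuffle power: `a^{ш̄ 0} = 1`, `a^{ш̄ (i+1)} = a ш̄ a^{ш̄ i}`. -/
noncomputable def nshPow : ℕ → H → H
  | 0, _ => 1
  | i + 1, a => nsh a (nshPow i a)

end H

open H

namespace NshProof

/-- The word of a list. -/
noncomputable def W (l : List Letter) : H := word (FreeMonoid.ofList l)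

theorem W_nil : W [] = 1 := rfl

theorem W_append (a b : List Letter) : W (a ++ b) = W a * W b := by
  simp [W, word, MonoidAlgebra.single_mul_single]

theorem W_cons (u : Letter) (l : List Letter) : W (u :: l) = word (FreeMonoid.of u) * W l :=
  W_append [u] l

theorem W_y : W [Letter.y] = Y := rfl

theorem wordInd {P : H → Prop} (a : H) (h0 : P 0) (hadd : ∀ a b, P a → P b → P (a + b))
    (hw : ∀ (c : ℚ) (l : List Letter), P (c • W l)) : P a := by
  induction a using MonoidAlgebra.induction_linear with
  | zero => exact h0
  | add f g hf hg => exact hadd f g hf hg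
  | single w c =>
    have := hw c (FreeMonoid.toList w)
    simpa [W, word] using this

/-- Linear extension of a map on words. -/
noncomputable def lin (f : FreeMonoid Letter → H) : H →ₗ[ℚ] H :=
  (Finsupp.linearCombination ℚ f).comp (MonoidAlgebra.coeffLinearEquiv ℚ).toLinearMap

theorem lin_apply (f : FreeMonoid Letter → H) (a : H) :
    lin f a = Finsupp.sum a.coeff fun w c => c • f w := rfl

theorem lin_W (f : FreeMonoid Letter → H) (l : List Letter) :
    lin f (W l) = f (FreeMonoid.ofList l) := by
  simp [lin_apply, W, word]

theorem S_eq (a : H) : S a = lin SW a := rfl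
theorem St_eq (a : H) : St a = lin StW a := rfl

/-- Bilinear extension of a map on pairs of words. -/
noncomputable def bil (f : List Letter → List Letter → H) : H →ₗ[ℚ] H →ₗ[ℚ] H :=
  (Finsupp.linearCombination ℚ
    (fun w1 : FreeMonoid Letter => lin fun w2 => f w1.toList w2.toList)).comp
    (MonoidAlgebra.coeffLinearEquiv ℚ).toLinearMap

theorem bil_apply (f : List Letter → List Letter → H) (a b : H) :
    bil f a b = Finsupp.sum a.coeff fun w1 c1 =>
      Finsupp.sum b.coeff fun w2 c2 => (c1 * c2) • f w1.toList w2.toList := by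
  have : bil f a = Finsupp.sum a.coeff fun w1 c1 =>
    c1 • (lin fun w2 => f w1.toList w2.toList) := rfl
  rw [this]
  simp [Finsupp.sum, LinearMap.sum_apply, lin_apply, Finset.smul_sum, mul_smul]

theorem sh_eq (a b : H) : sh a b = bil shW a b := (bil_apply _ _ _).symm
theorem nsh_eq (a b : H) : nsh a b = bil nshW a b := (bil_apply _ _ _).symm

theorem bil_W (f : List Letter → List Letter → H) (l m : List Letter) :
    bil f (W l) (W m) = f l m := by
  rw [bil_apply]
  simp [W, word]

theorem shW_nil_right (l : List Letter) : shW l [] = W l := by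
  cases l <;> simp [shW, W]
theorem nshW_nil_right (l : List Letter) : nshW l [] = W l := by
  cases l <;> simp [nshW, W]

theorem bil_one_left (f : List Letter → List Letter → H) (hf : ∀ l, f [] l = W l) (a : H) :
    bil f 1 a = a := by
  induction a using wordInd with
  | h0 => simp
  | hadd a b ha hb => rw [map_add, ha, hb]
  | hw c l => rw [map_smul, ← W_nil, bil_W, hf]

theorem bil_one_right (f : List Letter → List Letter → H) (hf : ∀ l, f l [] = W l) (a : H) :
    bil f a 1 = a := by
  induction a using wordInd with
  | h0 => simp
  | hadd a b ha hb => rw [map_add, LinearMap.add_apply, ha, hb]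
  | hw c l => rw [map_smul, LinearMap.smul_apply, ← W_nil, bil_W, hf]

theorem sh_rec (u v : Letter) (A B : H) :
    bil shW (word (FreeMonoid.of u) * A) (word (FreeMonoid.of v) * B) =
      word (FreeMonoid.of u) * bil shW A (word (FreeMonoid.of v) * B) +
      word (FreeMonoid.of v) * bil shW (word (FreeMonoid.of u) * A) B := by
  induction A using wordInd with
  | h0 => simp
  | hadd a b ha hb => simp only [mul_add, map_add, LinearMap.add_apply, ha, hb]; abel
  | hw c l =>
    induction B using wordInd with
    | h0 => simp
    | hadd a b ha hb => simp only [mul_add, map_add, ha, hb]; abel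
    | hw d m =>
      simp only [mul_smul_comm, map_smul, LinearMap.smul_apply, ← W_cons, bil_W, shW, smul_add]

/-- `S₁` of a letter. -/
noncomputable def s (u : Letter) : H := S1 (word (FreeMonoid.of u))

theorem s_x : s Letter.x = word (FreeMonoid.of Letter.x) := by
  simp [s, S1, word, X]
theorem s_y : s Letter.y = word (FreeMonoid.of Letter.x) + word (FreeMonoid.of Letter.y) := by
  simp [s, S1, word, X, Y]

theorem sh_rec_s (u v : Letter) (A B : H) :
    bil shW (s u * A) (s v * B) = s u * bil shW A (s v * B) + s v * bil shW (s u * A) B := by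
  cases u <;> cases v <;>
    simp only [s_x, s_y, add_mul, mul_add, map_add, LinearMap.add_apply, sh_rec] <;> abel

theorem sh_rec_y_s (v : Letter) (B : H) :
    bil shW Y (s v * B) = Y * (s v * B) + s v * bil shW Y B := by
  have h := fun v => sh_rec Letter.y v 1 B
  simp only [mul_one, bil_one_left shW (fun l => by simp [shW, W])] at h
  cases v <;>
    simp only [s_x, s_y, add_mul, mul_add, map_add, Y, h] <;> abel

theorem sh_rec_s_y (v : Letter) (B : H) :
    bil shW (s v * B) Y = Y * (s v * B) + s v * bil shW B Y := by
  have h := fun v => sh_rec v Letter.y B 1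
  simp only [mul_one, bil_one_right shW shW_nil_right] at h
  cases v <;>
    simp only [s_x, s_y, add_mul, mul_add, map_add, LinearMap.add_apply, Y, h] <;> abel

theorem sh_y_y : bil shW Y Y = Y * Y + Y * Y := by
  have h := sh_rec Letter.y Letter.y 1 1
  simp only [mul_one, bil_one_right shW shW_nil_right,
    bil_one_left shW (fun l => by simp [shW, W])] at h
  exact h

theorem S_mul_Y (F : H) : lin SW (F * Y) = S1 F * Y := by
  induction F using wordInd with
  | h0 => simp
  | hadd a b ha hb => simp only [add_mul, map_add, ha, hb]
  | hw c l =>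
    rw [smul_mul_assoc, map_smul, map_smul, smul_mul_assoc, ← W_y, ← W_append, lin_W]
    simp [SW, W, Y]

theorem St_mul_Y (F : H) : lin StW (F * Y) = S2 F * Y := by
  induction F using wordInd with
  | h0 => simp
  | hadd a b ha hb => simp only [add_mul, map_add, ha, hb]
  | hw c l =>
    rw [smul_mul_assoc, map_smul, map_smul, smul_mul_assoc, ← W_y, ← W_append, lin_W]
    simp [StW, W, Y]

theorem S_one : lin SW 1 = 1 := by
  rw [← W_nil, lin_W]; simp [SW, W]
theorem St_one : lin StW 1 = 1 := by
  rw [← W_nil, lin_W]; simp [StW, W]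
theorem S_Y : lin SW Y = Y := by
  simpa using S_mul_Y 1

/-- `Hy`. -/
noncomputable abbrev HY : Submodule ℚ H := LinearMap.range (LinearMap.mulRight ℚ Y)

theorem HY_mul {a : H} (b : H) (h : a ∈ HY) : b * a ∈ HY := by
  obtain ⟨F, rfl⟩ := h
  exact ⟨b * F, by simp [mul_assoc]⟩

theorem W_mem (l : List Letter) : W (l ++ [Letter.y]) ∈ HY :=
  ⟨W l, by simp [W_append, W_y]⟩

theorem S_letter_mul (u : Letter) {a : H} (h : a ∈ HY) :
    lin SW (word (FreeMonoid.of u) * a) = s u * lin SW a := by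
  obtain ⟨F, rfl⟩ := h
  simp only [LinearMap.mulRight_apply]
  rw [← mul_assoc, S_mul_Y, S_mul_Y, map_mul, s, mul_assoc]

theorem δ_append (l : List Letter) (u : Letter) : δ (l ++ [u]) = 0 := by
  cases l <;> rfl

theorem main_words : ∀ F G : List Letter,
    nshW (F ++ [Letter.y]) (G ++ [Letter.y]) ∈ HY ∧
    lin SW (nshW (F ++ [Letter.y]) (G ++ [Letter.y])) =
      bil shW (lin SW (W (F ++ [Letter.y]))) (lin SW (W (G ++ [Letter.y])))
  | [], [] => by
    have e : nshW [Letter.y] [Letter.y] = W [Letter.y, Letter.y] + W [Letter.y, Letter.y]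
        - W [Letter.x, Letter.y] - W [Letter.x, Letter.y] := by
      simp [nshW, δ, τ, W_cons, W_nil, W, word]
    have m1 := W_mem [Letter.y]
    have m2 := W_mem [Letter.x]
    simp only [List.nil_append, List.cons_append] at *
    refine ⟨?_, ?_⟩
    · rw [e]
      exact HY.sub_mem (HY.sub_mem (HY.add_mem m1 m1) m2) m2
    · have m0 := W_mem []
      simp only [List.nil_append, W_y] at m0
      rw [e, W_cons, W_cons Letter.x, W_y]
      simp only [map_add, map_sub, S_letter_mul _ m0, S_Y, sh_y_y, s_x, s_y, add_mul]
      simp only [Y]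
      abel
  | [], v :: G => by
    obtain ⟨hm, hS⟩ := main_words [] G
    have e : nshW [Letter.y] (v :: (G ++ [Letter.y])) =
        Y * W (v :: (G ++ [Letter.y])) + word (FreeMonoid.of v) * nshW [Letter.y] (G ++ [Letter.y])
        - X * W (v :: (G ++ [Letter.y])) := by
      rw [nshW, δ_append]
      simp [nshW, δ, τ, W_cons, W, word, X, Y]
    have m1 := W_mem (v :: G)
    have m0 := W_mem G
    simp only [List.nil_append, List.cons_append] at *
    refine ⟨?_, ?_⟩
    · rw [e]
      exact HY.sub_mem (HY.add_mem (HY_mul _ m1) (HY_mul _ hm)) (HY_mul _ m1)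
    · rw [e, X, Y]
      simp only [map_add, map_sub, S_letter_mul _ m1, S_letter_mul _ hm, hS]
      rw [W_cons, S_letter_mul _ m0, W_y, S_Y, sh_rec_y_s, s_x, s_y, Y]
      simp only [add_mul]
      abel
  | v :: G, [] => by
    obtain ⟨hm, hS⟩ := main_words G []
    have e : nshW (v :: (G ++ [Letter.y])) [Letter.y] =
        Y * W (v :: (G ++ [Letter.y])) + word (FreeMonoid.of v) * nshW (G ++ [Letter.y]) [Letter.y]
        - X * W (v :: (G ++ [Letter.y])) := by
      rw [nshW, δ_append, nshW_nil_right, add_comm]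
      simp [δ, τ, W_cons, W, word, X, Y]
    have m1 := W_mem (v :: G)
    have m0 := W_mem G
    simp only [List.nil_append, List.cons_append] at *
    refine ⟨?_, ?_⟩
    · rw [e]
      exact HY.sub_mem (HY.add_mem (HY_mul _ m1) (HY_mul _ hm)) (HY_mul _ m1)
    · rw [e, X, Y]
      simp only [map_add, map_sub, S_letter_mul _ m1, S_letter_mul _ hm, hS]
      rw [W_cons, S_letter_mul _ m0, W_y, S_Y, sh_rec_s_y, s_x, s_y, Y]
      simp only [add_mul]
      abel
  | u :: F, v :: G => by
    obtain ⟨hm1, hS1⟩ := main_words F (v :: G)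
    obtain ⟨hm2, hS2⟩ := main_words (u :: F) G
    have m1 := W_mem F
    have m2 := W_mem G
    simp only [List.cons_append] at *
    have e : nshW (u :: (F ++ [Letter.y])) (v :: (G ++ [Letter.y])) =
        word (FreeMonoid.of u) * nshW (F ++ [Letter.y]) (v :: (G ++ [Letter.y])) +
        word (FreeMonoid.of v) * nshW (u :: (F ++ [Letter.y])) (G ++ [Letter.y]) := by
      rw [nshW, δ_append, δ_append]
      simp
    refine ⟨?_, ?_⟩
    · rw [e]
      exact HY.add_mem (HY_mul _ hm1) (HY_mul _ hm2)
    · rw [e, map_add, S_letter_mul _ hm1, S_letter_mul _ hm2, hS1, hS2, W_cons, W_cons,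
        S_letter_mul _ m1, S_letter_mul _ m2, sh_rec_s]
termination_by F G => F.length + G.length

theorem main_HY (F G : H) : lin SW (bil nshW (F * Y) (G * Y)) =
    bil shW (lin SW (F * Y)) (lin SW (G * Y)) := by
  induction F using wordInd with
  | h0 => simp
  | hadd a b ha hb => simp only [add_mul, map_add, LinearMap.add_apply, ha, hb]
  | hw c l =>
    induction G using wordInd with
    | h0 => simp
    | hadd a b ha hb => simp only [add_mul, map_add, ha, hb]
    | hw d m =>
      have h := (main_words l m).2
      simp only [smul_mul_assoc, map_smul, LinearMap.smul_apply]
      rw [← W_y, ← W_append, ← W_append, bil_W, h]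

theorem mem_H1 {a : H} : a ∈ H1 ↔ ∃ (F : H) (c : ℚ), a = F * Y + c • (1 : H) := by
  simp only [H1, Submodule.mem_sup, Submodule.mem_span_singleton, LinearMap.mem_range,
    LinearMap.mulRight_apply]
  constructor
  · rintro ⟨_, ⟨F, rfl⟩, _, ⟨c, rfl⟩, rfl⟩
    exact ⟨F, c, rfl⟩
  · rintro ⟨F, c, rfl⟩
    exact ⟨_, ⟨F, rfl⟩, _, ⟨c, rfl⟩, rfl⟩

theorem S1_W_cons (u : Letter) (l : List Letter) : S1 (W (u :: l)) = s u * S1 (W l) := by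
  rw [W_cons, map_mul, s]

theorem S2_s (u : Letter) : S2 (s u) = word (FreeMonoid.of u) := by
  cases u
  · rw [s_x]; simp [S2, word, X]
  · rw [s_y]; simp [S2, word, X, Y]

theorem S2_S1 (F : H) : S2 (S1 F) = F := by
  induction F using wordInd with
  | h0 => simp
  | hadd a b ha hb => simp only [map_add, ha, hb]
  | hw c l =>
    rw [map_smul, map_smul]
    congr 1
    induction l with
    | nil => simp [W_nil]
    | cons u l ih => rw [S1_W_cons, map_mul, S2_s, ih, W_cons]

theorem S1_S2_letter (u : Letter) :
    S1 (S2 (word (FreeMonoid.of u))) = word (FreeMonoid.of u) := by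
  cases u <;> simp [S1, S2, word, X, Y]

theorem S1_S2 (F : H) : S1 (S2 F) = F := by
  induction F using wordInd with
  | h0 => simp
  | hadd a b ha hb => simp only [map_add, ha, hb]
  | hw c l =>
    rw [map_smul, map_smul]
    congr 1
    induction l with
    | nil => simp [W_nil]
    | cons u l ih => rw [W_cons, map_mul, map_mul, S1_S2_letter, ih]

theorem S_H1 (F : H) (c : ℚ) : S (F * Y + c • (1 : H)) = S1 F * Y + c • (1 : H) := by
  rw [S_eq, map_add, map_smul, S_mul_Y, S_one]

theorem St_H1 (F : H) (c : ℚ) : St (F * Y + c • (1 : H)) = S2 F * Y + c • (1 : H) := by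
  rw [St_eq, map_add, map_smul, St_mul_Y, St_one]

end NshProof

open NshProof in

/-- `S(w₁ ш̄ w₂) = S(w₁) ш S(w₂)` for all `w₁, w₂ ∈ H¹`; together with the fact
that `S` maps `H¹` bijectively onto `H¹` (it is ℚ-linear by construction),
this says `S` is a ℚ-algebra isomorphism from `(H¹, ш̄)` to `(H¹, ш)`. -/
theorem S_nsh_to_sh :
    (∀ w1 ∈ H1, ∀ w2 ∈ H1, S (nsh w1 w2) = sh (S w1) (S w2)) ∧
    Set.BijOn S (H1 : Set H) (H1 : Set H) := by
  refine ⟨?_, ?_⟩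
  · intro w1 h1 w2 h2
    obtain ⟨F, c, rfl⟩ := mem_H1.1 h1
    obtain ⟨G, d, rfl⟩ := mem_H1.1 h2
    simp only [S_eq, sh_eq, nsh_eq, map_add, map_smul, LinearMap.add_apply, LinearMap.smul_apply,
      main_HY, S_one, bil_one_right shW shW_nil_right, bil_one_right nshW nshW_nil_right,
      bil_one_left shW (fun l => by simp [shW, W]), bil_one_left nshW (fun l => by simp [nshW, W])]
  · refine Set.InvOn.bijOn (f' := St) ⟨?_, ?_⟩ ?_ ?_
    · intro a ha
      obtain ⟨F, c, rfl⟩ := mem_H1.1 ha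
      rw [S_H1, St_H1, S2_S1]
    · intro a ha
      obtain ⟨F, c, rfl⟩ := mem_H1.1 ha
      rw [St_H1, S_H1, S1_S2]
    · intro a ha
      obtain ⟨F, c, rfl⟩ := mem_H1.1 ha
      rw [S_H1]
      exact mem_H1.2 ⟨_, _, rfl⟩
    · intro a ha
      obtain ⟨F, c, rfl⟩ := mem_H1.1 ha
      rw [St_H1]
      exact mem_H1.2 ⟨_, _, rfl⟩
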